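/- The matrix E − Gᵀ F⁻¹ G is positive semidefinite, provided F is invertible; that is, the generalized Cramér–Rao matrix inequality E ≥ Gᵀ F⁻¹ G holds. -/

import Mathlib

open Matrix

/-- Generalized Cramér–Rao matrix inequality: `E ≥ Gᵀ F⁻¹ G`. -/
theorem generalized_cramer_rao_matrix
    {k : ℕ} {Y : Type*} [Fintype Y]
    (θ₀ : Fin k → ℝ) (p : (Fin k → ℝ) → Y → ℝ) (t : Y → Fin k → ℝ)
    (hpos : ∀ y, 0 < p θ₀ y)
    (hsum : ∀ θ, ∑ y, p θ y = 1)
    (hdiff : ∀ y, DifferentiableAt ℝ (fun θ => p θ y) θ₀)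
    (s : Y → Fin k → ℝ)
    (hs : ∀ y i, s y i = (p θ₀ y)⁻¹ * fderiv ℝ (fun θ => p θ y) θ₀ (Pi.single i 1))
    (E F G : Matrix (Fin k) (Fin k) ℝ)
    (hE : E = ∑ y, p θ₀ y • vecMulVec (t y - θ₀) (t y - θ₀))
    (hF : F = ∑ y, p θ₀ y • vecMulVec (s y) (s y))
    (hG : G = ∑ y, p θ₀ y • vecMulVec (s y) (t y - θ₀))
    (hFinv : IsUnit F) :
    (E - Gᵀ * F⁻¹ * G).PosSemidef := by
  have key : ∀ a b : Y → Fin k → ℝ,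
      ∑ y, p θ₀ y • vecMulVec (a y) (b y) =
        (Matrix.of fun y i => √(p θ₀ y) * a y i)ᵀ * (Matrix.of fun y i => √(p θ₀ y) * b y i) := by
    intro a b
    ext i j
    simp only [Matrix.sum_apply, Matrix.smul_apply, vecMulVec_apply, smul_eq_mul, mul_apply,
      transpose_apply, of_apply]
    refine Finset.sum_congr rfl fun y _ => ?_
    have h := Real.mul_self_sqrt (hpos y).le
    calc p θ₀ y * (a y i * b y j) = (√(p θ₀ y) * √(p θ₀ y)) * (a y i * b y j) := by rw [h]
      _ = _ := by ring
  rw [key s s] at hF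
  rw [key s (fun y => t y - θ₀)] at hG
  rw [key (fun y => t y - θ₀) (fun y => t y - θ₀)] at hE
  generalize (Matrix.of fun y i => √(p θ₀ y) * s y i) = S at hF hG
  generalize (Matrix.of fun y i => √(p θ₀ y) * (t y - θ₀) i) = T at hE hG
  have hdet : IsUnit F.det := (Matrix.isUnit_iff_isUnit_det F).mp hFinv
  have hFT : Fᵀ = F := by rw [hF]; simp
  have hGT : Gᵀ = Tᵀ * S := by rw [hG]; simp
  have hmain : E - Gᵀ * F⁻¹ * G = (T - S * (F⁻¹ * G))ᴴ * (T - S * (F⁻¹ * G)) := by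
    have h1 : Gᵀ * F⁻¹ * (Sᵀ * (S * (F⁻¹ * G))) = Gᵀ * F⁻¹ * G := by
      rw [← Matrix.mul_assoc Sᵀ, ← hF, Matrix.mul_nonsing_inv_cancel_left _ _ hdet]
    have h2 : Tᵀ * (S * (F⁻¹ * G)) = Gᵀ * F⁻¹ * G := by
      rw [hGT]; simp only [Matrix.mul_assoc]
    have h3 : (S * (F⁻¹ * G))ᵀ = Gᵀ * F⁻¹ * Sᵀ := by
      rw [transpose_mul, transpose_mul, transpose_nonsing_inv, hFT]
    rw [conjTranspose_eq_transpose_of_trivial, transpose_sub, h3, Matrix.sub_mul, Matrix.mul_sub,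
      Matrix.mul_sub, h2, Matrix.mul_assoc _ Sᵀ, Matrix.mul_assoc _ Sᵀ, h1, ← hE, ← hG]
    abel
  rw [hmain]
  exact posSemidef_conjTranspose_mul_self _
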